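/- arXiv:0704.2500 — 2 statements merged into one kernel-verified Lean document; each statement's English description precedes it below -/
import Mathlib

section
/- In the normal-means setting of the context with Σ the identity matrix, w a standard Gaussian vector in ℝ^n, probe set Ψ̃ of explicit ℓ_p-duality vectors, δ = ε and κ = √(2 ln(N²/ε)), the selected estimator μ̂ satisfies E|μ̂ − μ|_p ≤ 3·min_{i∈I_N} |μ − μ_i|_p + 2Q(p)·ε·√(2 ln(N²/ε)) + 2Lε, where Q(p) = 1 for p ∈ [2,∞); Q(p) = max_{i∈I_N, i≠i*} (|μ_{i*} − μ_i|_{2p−2}/|μ_{i*} − μ_i|_p)^{p−1} for p ∈ (1,2]; and Q(1) = max_{i∈I_N, i≠i*} √(card{k : μ_i(k) ≠ μ_{i*}(k)}). -/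
open MeasureTheory Matrix
open scoped ENNReal

/-- The `ℓ_r` norm of a vector in `ℝ^n`, for `r ∈ [1,∞]`. -/
noncomputable def lnorm {n : ℕ} (r : ℝ≥0∞) (v : Fin n → ℝ) : ℝ :=
  if r = ⊤ then ⨆ k, |v k| else (∑ k, |v k| ^ r.toReal) ^ (1 / r.toReal)

lemma lnorm_real {n : ℕ} {r : ℝ≥0∞} (hr : r ≠ ⊤) (v : Fin n → ℝ) :
    lnorm r v = (∑ k, |v k| ^ r.toReal) ^ (1 / r.toReal) := by
  simp [lnorm, hr]

lemma lnorm_two {n : ℕ} (v : Fin n → ℝ) : lnorm 2 v = Real.sqrt (∑ k, v k ^ 2) := by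
  rw [lnorm_real (by simp), Real.sqrt_eq_rpow]
  simp

lemma lnorm_nonneg' {n : ℕ} {r : ℝ≥0∞} (hr : r ≠ ⊤) (v : Fin n → ℝ) : 0 ≤ lnorm r v := by
  rw [lnorm_real hr]; positivity

lemma lnorm_pos' {n : ℕ} {r : ℝ≥0∞} (hr : r ≠ ⊤) {v : Fin n → ℝ} (hv : v ≠ 0) :
    0 < lnorm r v := by
  rw [lnorm_real hr]
  obtain ⟨k, hk⟩ := Function.ne_iff.mp hv
  apply Real.rpow_pos_of_pos
  apply Finset.sum_pos' (fun i _ => by positivity)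
  exact ⟨k, Finset.mem_univ _, Real.rpow_pos_of_pos (abs_pos.mpr hk) _⟩

lemma lnorm_sub_comm' {n : ℕ} (r : ℝ≥0∞) (u v : Fin n → ℝ) : lnorm r (u - v) = lnorm r (v - u) := by
  simp only [lnorm, Pi.sub_apply, abs_sub_comm]

lemma lnorm_neg' {n : ℕ} (r : ℝ≥0∞) (u : Fin n → ℝ) : lnorm r (-u) = lnorm r u := by
  simp only [lnorm, Pi.neg_apply, abs_neg]

lemma toReal_ge_one {p : ℝ≥0∞} (hp : 1 ≤ p) (hp' : p ≠ ⊤) : 1 ≤ p.toReal := by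
  simpa using (ENNReal.toReal_le_toReal (by simp) hp').mpr hp

lemma lnorm_add_le' {n : ℕ} {p : ℝ≥0∞} (hp : 1 ≤ p) (hp' : p ≠ ⊤) (u v : Fin n → ℝ) :
    lnorm p (u + v) ≤ lnorm p u + lnorm p v := by
  simp only [lnorm_real hp', Pi.add_apply]
  exact Real.Lp_add_le _ _ _ (toReal_ge_one hp hp')

lemma sum_u {n : ℕ} {p : ℝ≥0∞} (hp : 1 ≤ p) (hp' : p ≠ ⊤) {d : Fin n → ℝ} (hd : d ≠ 0) :
    ∑ k, (|d k| / lnorm p d) ^ p.toReal = 1 := by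
  have hP := toReal_ge_one hp hp'
  have hD := lnorm_pos' hp' hd
  have h : lnorm p d ^ p.toReal = ∑ k, |d k| ^ p.toReal := by
    rw [lnorm_real hp', ← Real.rpow_mul (by positivity), one_div_mul_cancel (by positivity),
      Real.rpow_one]
  have : 0 < lnorm p d ^ p.toReal := by positivity
  simp only [fun k => Real.div_rpow (abs_nonneg (d k)) hD.le p.toReal]
  rw [← Finset.sum_div, ← h, div_self this.ne']

lemma psi_eq {n : ℕ} {p : ℝ≥0∞} (hp' : p ≠ ⊤) {d : Fin n → ℝ}
    {ψ : Fin n → ℝ} (h : ∀ k, ψ k = |d k| ^ (p.toReal - 1) * Real.sign (d k) /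
        lnorm p d ^ (p.toReal - 1)) (k : Fin n) :
    ψ k = (|d k| / lnorm p d) ^ (p.toReal - 1) * Real.sign (d k) := by
  rw [h, Real.div_rpow (abs_nonneg _) (lnorm_nonneg' hp' _)]; ring

lemma psi_abs {n : ℕ} {p : ℝ≥0∞} (hp : 1 < p) (hp' : p ≠ ⊤) {d : Fin n → ℝ}
    {ψ : Fin n → ℝ} (h : ∀ k, ψ k = |d k| ^ (p.toReal - 1) * Real.sign (d k) /
        lnorm p d ^ (p.toReal - 1)) (k : Fin n) :
    |ψ k| = (|d k| / lnorm p d) ^ (p.toReal - 1) := by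
  have hP : 1 < p.toReal := by
    simpa using (ENNReal.toReal_lt_toReal (by simp) hp').mpr hp
  rw [psi_eq hp' h, abs_mul, abs_of_nonneg
    (Real.rpow_nonneg (div_nonneg (abs_nonneg _) (lnorm_nonneg' hp' _)) _)]
  rcases lt_trichotomy (d k) 0 with h | h | h
  · simp [Real.sign_of_neg h]
  · simp [h, Real.zero_rpow (by linarith : p.toReal - 1 ≠ 0)]
  · simp [Real.sign_of_pos h]

lemma psi_dot {n : ℕ} {p : ℝ≥0∞} (hp : 1 ≤ p) (hp' : p ≠ ⊤) {d : Fin n → ℝ} (hd : d ≠ 0)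
    {ψ : Fin n → ℝ} (h : ∀ k, ψ k = |d k| ^ (p.toReal - 1) * Real.sign (d k) /
        lnorm p d ^ (p.toReal - 1)) :
    ψ ⬝ᵥ d = lnorm p d := by
  have hP := toReal_ge_one hp hp'
  have hD := lnorm_pos' hp' hd
  have : ∀ k, ψ k * d k = lnorm p d * (|d k| / lnorm p d) ^ p.toReal := by
    intro k
    rw [psi_eq hp' h, mul_assoc]
    have hs : Real.sign (d k) * d k = |d k| := by
      rcases lt_trichotomy (d k) 0 with h | h | h
      · simp [Real.sign_of_neg h, abs_of_neg h]
      · simp [h]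
      · simp [Real.sign_of_pos h, abs_of_pos h]
    rw [hs]
    rcases eq_or_lt_of_le (abs_nonneg (d k)) with h0 | h0
    · rw [← h0]; simp [Real.zero_rpow (by linarith : p.toReal ≠ 0)]
    · have hu : 0 < |d k| / lnorm p d := by positivity
      rw [Real.rpow_sub_one hu.ne']
      field_simp
  simp only [dotProduct, this, ← Finset.mul_sum, sum_u hp hp' hd, mul_one]

lemma holder_real {p q : ℝ≥0∞} (hp : 1 < p) (hp' : p ≠ ⊤) (hpq : 1 / p + 1 / q = 1) :
    q ≠ ⊤ ∧ p.toReal.HolderConjugate q.toReal := by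
  have hP : 1 < p.toReal := by
    simpa using (ENNReal.toReal_lt_toReal (by simp) hp').mpr hp
  have hq : q ≠ ⊤ := by
    rintro rfl
    simp at hpq
    simp [hpq] at hp
  refine ⟨hq, ?_⟩
  rw [Real.holderConjugate_iff]
  refine ⟨hP, ?_⟩
  have := congrArg ENNReal.toReal hpq
  have hq0 : q ≠ 0 := by rintro rfl; simp at hpq
  rw [ENNReal.toReal_add] at this
  · simpa using this
  · simp; rintro rfl; simp at hp
  · simpa using hq0

lemma psi_holder {n : ℕ} {p q : ℝ≥0∞} (hp : 1 ≤ p) (hp' : p ≠ ⊤) (hpq : 1 / p + 1 / q = 1)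
    {d : Fin n → ℝ} (hd : d ≠ 0)
    {ψ : Fin n → ℝ} (h : ∀ k, ψ k = |d k| ^ (p.toReal - 1) * Real.sign (d k) /
        lnorm p d ^ (p.toReal - 1)) :
    lnorm q ψ = 1 ∧ ∀ v, |ψ ⬝ᵥ v| ≤ lnorm p v := by
  rcases eq_or_lt_of_le hp with rfl | hp1
  · have hq : q = ⊤ := by
      simp at hpq
      by_contra hq
      exact hq hpq
    subst hq
    have h1 : ∀ k, ψ k = Real.sign (d k) := by intro k; rw [h]; simp
    have h2 : ∀ k, |ψ k| ≤ 1 := by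
      intro k; rw [h1]
      rcases Real.sign_apply_eq (d k) with h | h | h <;> simp [h]
    constructor
    · obtain ⟨k, hk⟩ := Function.ne_iff.mp hd
      have : Nonempty (Fin n) := ⟨k⟩
      simp only [lnorm, if_true]
      apply le_antisymm (ciSup_le h2)
      refine le_trans ?_ (le_ciSup (f := fun k => |ψ k|) (Set.finite_range _).bddAbove k)
      simp only [h1]
      rcases Real.sign_apply_eq_of_ne_zero (d k) hk with h | h <;> simp [h]
    · intro v
      rw [lnorm_real (by simp)]
      simp only [dotProduct, ENNReal.toReal_one, Real.rpow_one, div_one]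
      refine (Finset.abs_sum_le_sum_abs _ _).trans (Finset.sum_le_sum fun k _ => ?_)
      rw [abs_mul]
      exact mul_le_of_le_one_left (abs_nonneg _) (h2 k)
  · obtain ⟨hq, hc⟩ := holder_real hp1 hp' hpq
    have hD := lnorm_pos' hp' hd
    have h1 : lnorm q ψ = 1 := by
      rw [lnorm_real hq]
      have : ∀ k, |ψ k| ^ q.toReal = (|d k| / lnorm p d) ^ p.toReal := by
        intro k
        rw [psi_abs hp1 hp' h, ← Real.rpow_mul (by positivity), hc.sub_one_mul_conj]
      simp only [this, sum_u hp hp' hd, Real.one_rpow]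
    refine ⟨h1, fun v => ?_⟩
    have key : ∀ v, ψ ⬝ᵥ v ≤ lnorm p v := by
      intro v
      have := Real.inner_le_Lp_mul_Lq Finset.univ v ψ hc
      rw [← lnorm_real hp', ← lnorm_real hq, h1, mul_one] at this
      rw [dotProduct_comm]; exact this
    rw [abs_le']
    refine ⟨key v, ?_⟩
    have := key (-v)
    rwa [dotProduct_neg, lnorm_neg'] at this

lemma psi_two_high {n : ℕ} {p : ℝ≥0∞} (hp : 2 ≤ p) (hp' : p ≠ ⊤)
    {d : Fin n → ℝ} (hd : d ≠ 0)
    {ψ : Fin n → ℝ} (h : ∀ k, ψ k = |d k| ^ (p.toReal - 1) * Real.sign (d k) /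
        lnorm p d ^ (p.toReal - 1)) : lnorm 2 ψ ≤ 1 := by
  have hp1 : 1 < p := lt_of_lt_of_le (by norm_num) hp
  have hP : 2 ≤ p.toReal := by
    simpa using (ENNReal.toReal_le_toReal (by simp) hp').mpr hp
  have hD := lnorm_pos' hp' hd
  have hs := sum_u hp1.le hp' hd
  rw [lnorm_two, Real.sqrt_le_iff, one_pow]
  refine ⟨by norm_num, ?_⟩
  rw [← hs]
  refine Finset.sum_le_sum fun k _ => ?_
  have hu : |d k| / lnorm p d ≤ 1 := by
    have := Finset.single_le_sum (f := fun k => (|d k| / lnorm p d) ^ p.toReal)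
      (fun i _ => by positivity) (Finset.mem_univ k)
    rw [hs] at this
    by_contra hc
    push Not at hc
    have := Real.one_lt_rpow hc (by linarith : 0 < p.toReal)
    linarith
  rw [← sq_abs, psi_abs hp1 hp' h, ← Real.rpow_natCast, ← Real.rpow_mul (by positivity)]
  apply Real.rpow_le_rpow_of_exponent_ge' (by positivity) hu (by linarith)
  push_cast; linarith

lemma psi_two_mid {n : ℕ} {p : ℝ≥0∞} (hp1 : 1 < p) (hp' : p ≠ ⊤)
    {d : Fin n → ℝ} (hd : d ≠ 0)
    {ψ : Fin n → ℝ} (h : ∀ k, ψ k = |d k| ^ (p.toReal - 1) * Real.sign (d k) /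
        lnorm p d ^ (p.toReal - 1)) :
    lnorm 2 ψ = (lnorm (2 * p - 2) d / lnorm p d) ^ (p.toReal - 1) := by
  have hP : 1 < p.toReal := by
    simpa using (ENNReal.toReal_lt_toReal (by simp) hp').mpr hp1
  have hD := lnorm_pos' hp' hd
  have ht : (2 * p - 2) ≠ ⊤ := ENNReal.sub_ne_top (ENNReal.mul_ne_top (by simp) hp')
  have hr : (2 * p - 2).toReal = 2 * (p.toReal - 1) := by
    rw [ENNReal.toReal_sub_of_le]
    · simp; ring
    · calc (2 : ℝ≥0∞) = 2 * 1 := by simp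
        _ ≤ 2 * p := by gcongr
    · exact ENNReal.mul_ne_top (by simp) hp'
  have hP1 : 0 < p.toReal - 1 := by linarith
  rw [Real.div_rpow (lnorm_nonneg' ht _) hD.le, lnorm_real ht, hr,
    ← Real.rpow_mul (by positivity), lnorm_two]
  have : ∀ k, ψ k ^ 2 = |d k| ^ (2 * (p.toReal - 1)) / (lnorm p d ^ (p.toReal - 1)) ^ 2 := by
    intro k
    rw [← sq_abs, psi_abs hp1 hp' h, Real.div_rpow (by positivity) hD.le, div_pow]
    congr 1
    rw [← Real.rpow_natCast, ← Real.rpow_mul (by positivity)]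
    push_cast; ring_nf
  simp only [this]
  rw [← Finset.sum_div, Real.sqrt_div (by positivity), Real.sqrt_sq (by positivity),
    Real.sqrt_eq_rpow]
  congr 2
  field_simp

lemma psi_two_one {n : ℕ} {d : Fin n → ℝ}
    {ψ : Fin n → ℝ} (h : ∀ k, ψ k = |d k| ^ ((1 : ℝ≥0∞).toReal - 1) * Real.sign (d k) /
        lnorm 1 d ^ ((1 : ℝ≥0∞).toReal - 1)) :
    lnorm 2 ψ = Real.sqrt ((Finset.univ.filter fun k => d k ≠ 0).card) := by
  rw [lnorm_two, Finset.card_filter]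
  push_cast
  congr 1
  refine Finset.sum_congr rfl fun k _ => ?_
  rw [h]
  rcases lt_trichotomy (d k) 0 with h | h | h
  · simp [Real.sign_of_neg h, h.ne]
  · simp [h]
  · simp [Real.sign_of_pos h, h.ne']

lemma gauss_tail {n : ℕ} {Ω : Type} [MeasurableSpace Ω] (P : Measure Ω)
    (w : Ω → Fin n → ℝ) (hw : Measurable w)
    (hwlaw : Measure.map w P = Measure.pi fun _ : Fin n => ProbabilityTheory.gaussianReal 0 1)
    (ψ : Fin n → ℝ) (hψ : 0 < lnorm 2 ψ) (κ : ℝ) (hκ : 0 ≤ κ) :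
    P.real {ω | κ * lnorm 2 ψ < ψ ⬝ᵥ w ω} ≤ Real.exp (-κ ^ 2 / 2) := by
  have hm : Measurable fun x : Fin n → ℝ => ψ ⬝ᵥ x := by
    unfold dotProduct; fun_prop
  have e : P.real {ω | κ * lnorm 2 ψ < ψ ⬝ᵥ w ω} =
      (Measure.pi fun _ : Fin n => ProbabilityTheory.gaussianReal 0 1).real
        {x | κ * lnorm 2 ψ < ψ ⬝ᵥ x} := by
    rw [← hwlaw, map_measureReal_apply hw (measurableSet_lt measurable_const hm)]
    rfl
  have hg : ∀ r : ℝ, ProbabilityTheory.HasSubgaussianMGF (fun x : ℝ => r * x)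
      (Real.toNNReal (r ^ 2)) (ProbabilityTheory.gaussianReal 0 1) := by
    intro r
    refine ⟨fun t => ?_, fun t => ?_⟩
    · simp only [← mul_assoc]
      exact ProbabilityTheory.integrable_exp_mul_gaussianReal _
    · rw [ProbabilityTheory.mgf_const_mul, ProbabilityTheory.mgf_fun_id_gaussianReal,
        Real.coe_toNNReal _ (sq_nonneg r)]
      simp [mul_pow]
  have hsub : ∀ k ∈ (Finset.univ : Finset (Fin n)),
      ProbabilityTheory.HasSubgaussianMGF (fun x : Fin n → ℝ => ψ k * x k)
      (Real.toNNReal (ψ k ^ 2))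
      (Measure.pi fun _ : Fin n => ProbabilityTheory.gaussianReal 0 1) := by
    intro k _
    have hk := hg (ψ k)
    have mp := measurePreserving_eval (fun _ : Fin n => ProbabilityTheory.gaussianReal 0 1) k
    refine ⟨fun t => ?_, fun t => ?_⟩
    · exact mp.integrable_comp_of_integrable (hk.integrable_exp_mul t)
    · refine le_trans (le_of_eq ?_) (hk.mgf_le t)
      unfold ProbabilityTheory.mgf
      conv_rhs => rw [← mp.map_eq]
      rw [integral_map mp.measurable.aemeasurable (by fun_prop)]
  have hind := ProbabilityTheory.iIndepFun_pi (μ := fun _ : Fin n => ProbabilityTheory.gaussianReal 0 1)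
    (X := fun k x => ψ k * x) (fun k => by fun_prop)
  have := ProbabilityTheory.HasSubgaussianMGF.measure_sum_ge_le_of_iIndepFun hind hsub
    (ε := κ * lnorm 2 ψ) (by positivity)
  rw [e]
  refine (measureReal_mono ?_).trans (this.trans (le_of_eq ?_))
  · intro x hx
    simp only [Set.mem_ofPred_eq] at hx ⊢
    exact hx.le
  · congr 1
    have h2 : ∑ k, ψ k ^ 2 = lnorm 2 ψ ^ 2 := by
      rw [lnorm_two, Real.sq_sqrt (by positivity)]
    simp only [NNReal.coe_sum, Real.coe_toNNReal _ (sq_nonneg _)]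
    rw [h2]
    field_simp

/-- Corollary 5 of the paper: oracle inequality for the normal-means
aggregation procedure with identity noise covariance, standard Gaussian noise, the
explicit `(0,p)`-good probe set `Ψ̃`, `δ = ε` and `κ = √(2 ln(N²/ε))`. -/
theorem stmt_15
    {n N : ℕ} (hn : 1 ≤ n) (hN : 2 ≤ N)
    (p q : ℝ≥0∞) (hp : 1 ≤ p) (hp' : p ≠ ⊤) (hpq : 1 / p + 1 / q = 1)
    (mu : Fin n → ℝ) (Mu : Fin N → Fin n → ℝ)
    (hdist : ∀ i j, i ≠ j → Mu i ≠ Mu j)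
    (L : ℝ) (hL : L = max (lnorm p mu) (⨆ i, lnorm p (Mu i)))
    (ε : ℝ) (hε0 : 0 < ε) (hε1 : ε < 1)
    -- the probe vectors `ψ̃_{ij}(k) = |μ_i(k) - μ_j(k)|^{p-1} sign(μ_i(k) - μ_j(k)) / |μ_i - μ_j|_p^{p-1}`
    (ψ : Fin N → Fin N → Fin n → ℝ)
    (hψdef : ∀ i j, i ≠ j → ∀ k, ψ i j k =
      |Mu i k - Mu j k| ^ (p.toReal - 1) * Real.sign (Mu i k - Mu j k) /
        lnorm p (Mu i - Mu j) ^ (p.toReal - 1))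
    -- standard Gaussian noise `w` in `ℝ^n`
    {Ω : Type} [MeasurableSpace Ω] (P : Measure Ω) [IsProbabilityMeasure P]
    (w : Ω → Fin n → ℝ) (hw : Measurable w)
    (hwlaw : Measure.map w P = Measure.pi fun _ : Fin n => ProbabilityTheory.gaussianReal 0 1)
    -- the selection procedure with `κ = √(2 ln(N²/ε))`
    (κ : ℝ) (hκ : κ = Real.sqrt (2 * Real.log ((N : ℝ) ^ 2 / ε)))
    (Mhat : Fin N → Ω → ℝ)
    (hM : ∀ i ω, Mhat i ω = ⨆ jl : {jl : Fin N × Fin N // jl.1 ≠ jl.2},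
      (|ψ jl.1.1 jl.1.2 ⬝ᵥ (mu + ε • w ω - Mu i)| - κ * ε * lnorm 2 (ψ jl.1.1 jl.1.2)) /
        lnorm q (ψ jl.1.1 jl.1.2))
    (ihat : Ω → Fin N) (hihatm : Measurable ihat)
    (hmin : ∀ ω i, Mhat (ihat ω) ω ≤ Mhat i ω)
    (istar : Fin N)
    (histar : ∀ i, lnorm p (mu - Mu istar) ≤ lnorm p (mu - Mu i))
    -- the constant `Q(p)`
    (Q : ℝ)
    (hQhigh : 2 ≤ p → Q = 1)
    (hQmid : 1 < p → p ≤ 2 → Q =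
      ⨆ j : {j : Fin N // j ≠ istar},
        (lnorm (2 * p - 2) (Mu istar - Mu j.1) / lnorm p (Mu istar - Mu j.1)) ^
          (p.toReal - 1))
    (hQone : p = 1 → Q =
      ⨆ j : {j : Fin N // j ≠ istar},
        Real.sqrt ((Finset.univ.filter fun k => Mu j.1 k ≠ Mu istar k).card)) :
    ∫ ω, lnorm p (Mu (ihat ω) - mu) ∂P ≤
      3 * (⨅ i, lnorm p (mu - Mu i))
        + 2 * Q * ε * Real.sqrt (2 * Real.log ((N : ℝ) ^ 2 / ε))
        + 2 * L * ε := by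
  classical
  have hP := toReal_ge_one hp hp'
  set r := lnorm p (mu - Mu istar) with hr
  have hr0 : 0 ≤ r := lnorm_nonneg' hp' _
  have : Nonempty (Fin N) := ⟨istar⟩
  have hinf : (⨅ i, lnorm p (mu - Mu i)) = r :=
    le_antisymm (ciInf_le (Set.finite_range _).bddBelow istar) (le_ciInf histar)
  have hd : ∀ i j, i ≠ j → Mu i - Mu j ≠ 0 := fun i j hij => sub_ne_zero.mpr (hdist i j hij)
  have hne : Nonempty {jl : Fin N × Fin N // jl.1 ≠ jl.2} :=
    ⟨⟨(⟨0, by omega⟩, ⟨1, by omega⟩), by simp [Fin.ext_iff]⟩⟩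
  have hψ' : ∀ i j, i ≠ j → ∀ k, ψ i j k =
      |(Mu i - Mu j) k| ^ (p.toReal - 1) * Real.sign ((Mu i - Mu j) k) /
        lnorm p (Mu i - Mu j) ^ (p.toReal - 1) := hψdef
  have hq1 : ∀ i j, i ≠ j → lnorm q (ψ i j) = 1 := fun i j hij =>
    (psi_holder hp hp' hpq (hd i j hij) (hψ' i j hij)).1
  have hhol : ∀ i j, i ≠ j → ∀ v, |ψ i j ⬝ᵥ v| ≤ lnorm p v := fun i j hij =>
    (psi_holder hp hp' hpq (hd i j hij) (hψ' i j hij)).2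
  have hdot : ∀ i j, i ≠ j → ψ i j ⬝ᵥ (Mu i - Mu j) = lnorm p (Mu i - Mu j) := fun i j hij =>
    psi_dot hp hp' (hd i j hij) (hψ' i j hij)
  have hneg : ∀ i j, i ≠ j → ψ j i = - ψ i j := by
    intro i j hij
    ext k
    rw [Pi.neg_apply, hψdef i j hij, hψdef j i hij.symm, lnorm_sub_comm', abs_sub_comm,
      ← neg_sub (Mu i k), Real.sign_neg]
    ring
  have h2pos : ∀ i j, i ≠ j → 0 < lnorm 2 (ψ i j) := by
    intro i j hij
    apply lnorm_pos' (by simp)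
    intro h0
    have := hdot i j hij
    have h1 := lnorm_pos' hp' (hd i j hij)
    rw [h0, zero_dotProduct] at this
    linarith
  -- the constant
  have hQ : ∀ j, j ≠ istar → lnorm 2 (ψ istar j) ≤ Q := by
    intro j hj
    have hpsi := hψ' istar j hj.symm
    have hdd := hd istar j hj.symm
    rcases le_total 2 p with h2 | h2
    · rw [hQhigh h2]; exact psi_two_high h2 hp' hdd hpsi
    · rcases eq_or_lt_of_le hp with h1 | h1
      · rw [hQone h1.symm]
        subst h1
        rw [psi_two_one hpsi]
        refine le_trans (le_of_eq ?_) (le_ciSup (f := fun j : {j : Fin N // j ≠ istar} =>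
          Real.sqrt ((Finset.univ.filter fun k => Mu j.1 k ≠ Mu istar k).card))
          (Set.finite_range _).bddAbove ⟨j, hj⟩)
        simp only [Pi.sub_apply, ne_eq, sub_eq_zero, eq_comm]
      · rw [hQmid h1 h2, psi_two_mid h1 hp' hdd hpsi]
        exact le_ciSup (f := fun j : {j : Fin N // j ≠ istar} =>
          (lnorm (2 * p - 2) (Mu istar - Mu j.1) / lnorm p (Mu istar - Mu j.1)) ^
          (p.toReal - 1)) (Set.finite_range _).bddAbove ⟨j, hj⟩
  have hQ0 : 0 ≤ Q := by
    obtain ⟨j, hj⟩ : ∃ j, j ≠ istar := by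
      have : Nontrivial (Fin N) := Fin.nontrivial_iff_two_le.mpr hN
      exact exists_ne istar
    exact (lnorm_nonneg' (by simp) _).trans (hQ j hj)
  have hκ0 : 0 ≤ κ := hκ ▸ Real.sqrt_nonneg _
  -- bounds by L
  have hLmu : lnorm p mu ≤ L := hL ▸ le_max_left _ _
  have hLi : ∀ i, lnorm p (Mu i) ≤ L := fun i => hL ▸
    (le_ciSup (f := fun i => lnorm p (Mu i)) (Set.finite_range _).bddAbove i).trans (le_max_right _ _)
  have hL0 : 0 ≤ L := (lnorm_nonneg' hp' _).trans hLmu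
  have hbad : ∀ i, lnorm p (Mu i - mu) ≤ 2 * L := by
    intro i
    have := lnorm_add_le' hp hp' (Mu i) (-mu)
    rw [lnorm_neg', ← sub_eq_add_neg] at this
    linarith [hLi i]
  -- bad event
  let B : Set Ω := ⋃ jl : {jl : Fin N × Fin N // jl.1 ≠ jl.2},
    {ω | κ * lnorm 2 (ψ jl.1.1 jl.1.2) < ψ jl.1.1 jl.1.2 ⬝ᵥ w ω}
  have hBm : MeasurableSet B := by
    refine MeasurableSet.iUnion fun jl => measurableSet_lt measurable_const ?_
    unfold dotProduct; fun_prop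
  have hNε : 1 ≤ (N : ℝ) ^ 2 / ε := by
    have : (2 : ℝ) ≤ N := by exact_mod_cast hN
    rw [le_div_iff₀ hε0]; nlinarith
  have hN0 : (0 : ℝ) < N := by
    have : (2 : ℝ) ≤ N := by exact_mod_cast hN
    linarith
  have hexp : Real.exp (-κ ^ 2 / 2) = ε / (N : ℝ) ^ 2 := by
    rw [hκ, Real.sq_sqrt (mul_nonneg (by norm_num) (Real.log_nonneg hNε)), neg_div,
      mul_div_cancel_left₀ _ (by norm_num), Real.exp_neg, Real.exp_log (by positivity), inv_div]
  have hPB : P.real B ≤ ε := by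
    calc P.real B ≤ ∑ jl : {jl : Fin N × Fin N // jl.1 ≠ jl.2},
          P.real {ω | κ * lnorm 2 (ψ jl.1.1 jl.1.2) < ψ jl.1.1 jl.1.2 ⬝ᵥ w ω} :=
            measureReal_iUnion_fintype_le _
      _ ≤ ∑ jl : {jl : Fin N × Fin N // jl.1 ≠ jl.2}, ε / (N : ℝ) ^ 2 := by
          refine Finset.sum_le_sum fun jl _ => ?_
          rw [← hexp]
          exact gauss_tail P w hw hwlaw _ (h2pos _ _ jl.2) κ hκ0
      _ ≤ ε := by
          rw [Finset.sum_const, nsmul_eq_mul, Finset.card_univ]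
          have hc : (Fintype.card {jl : Fin N × Fin N // jl.1 ≠ jl.2} : ℝ) ≤ (N : ℝ) ^ 2 := by
            have := Fintype.card_subtype_le (fun jl : Fin N × Fin N => jl.1 ≠ jl.2)
            rw [Fintype.card_prod, Fintype.card_fin, ← sq] at this
            exact_mod_cast this
          calc _ ≤ (N : ℝ) ^ 2 * (ε / (N : ℝ) ^ 2) := by gcongr
            _ = ε := by field_simp
  have hgood : ∀ ω, ω ∉ B → lnorm p (Mu (ihat ω) - mu) ≤ 3 * r + 2 * Q * ε * κ := by
    intro ω hω
    have hw1 : ∀ i j, i ≠ j → ψ i j ⬝ᵥ w ω ≤ κ * lnorm 2 (ψ i j) := by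
      intro i j hij
      by_contra hc
      exact hω (Set.mem_iUnion.mpr ⟨⟨(i, j), hij⟩, not_le.mp hc⟩)
    have hw2 : ∀ i j, i ≠ j → |ψ i j ⬝ᵥ w ω| ≤ κ * lnorm 2 (ψ i j) := by
      intro i j hij
      rw [abs_le']
      refine ⟨hw1 i j hij, ?_⟩
      have := hw1 j i hij.symm
      rwa [hneg i j hij, neg_dotProduct, lnorm_neg'] at this
    have hMs : Mhat istar ω ≤ r := by
      rw [hM]
      refine ciSup_le fun jl => ?_
      rw [hq1 _ _ jl.2, div_one]
      have e : mu + ε • w ω - Mu istar = (mu - Mu istar) + ε • w ω := by abel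
      rw [e, dotProduct_add, dotProduct_smul, smul_eq_mul]
      have h1 := abs_add_le (ψ jl.1.1 jl.1.2 ⬝ᵥ (mu - Mu istar)) (ε * (ψ jl.1.1 jl.1.2 ⬝ᵥ w ω))
      rw [abs_mul, abs_of_pos hε0] at h1
      have h2 := hhol _ _ jl.2 (mu - Mu istar)
      have h3 := mul_le_mul_of_nonneg_left (hw2 _ _ jl.2) hε0.le
      linarith
    have hMi : Mhat (ihat ω) ω ≤ r := (hmin ω istar).trans hMs
    by_cases hi : ihat ω = istar
    · rw [hi, lnorm_sub_comm', ← hr]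
      have : 0 ≤ 2 * Q * ε * κ := by positivity
      linarith
    · have hij : istar ≠ ihat ω := fun h => hi h.symm
      have hlow : ∀ i, |ψ istar (ihat ω) ⬝ᵥ (mu + ε • w ω - Mu i)|
          - κ * ε * lnorm 2 (ψ istar (ihat ω)) ≤ Mhat i ω := by
        intro i
        rw [hM]
        have := le_ciSup (f := fun jl : {jl : Fin N × Fin N // jl.1 ≠ jl.2} =>
          (|ψ jl.1.1 jl.1.2 ⬝ᵥ (mu + ε • w ω - Mu i)| - κ * ε * lnorm 2 (ψ jl.1.1 jl.1.2)) /
          lnorm q (ψ jl.1.1 jl.1.2)) (Set.finite_range _).bddAbove ⟨(istar, ihat ω), hij⟩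
        simp only [hq1 _ _ hij, div_one] at this
        exact this
      have h1 := hlow istar
      have h2 := hlow (ihat ω)
      have h3 := hdot _ _ hij
      have e : Mu istar - Mu (ihat ω) =
          (mu + ε • w ω - Mu (ihat ω)) - (mu + ε • w ω - Mu istar) := by abel
      have h4 : lnorm p (Mu istar - Mu (ihat ω)) ≤
          |ψ istar (ihat ω) ⬝ᵥ (mu + ε • w ω - Mu (ihat ω))| +
          |ψ istar (ihat ω) ⬝ᵥ (mu + ε • w ω - Mu istar)| := by
        rw [← h3]
        conv_lhs => rw [e, dotProduct_sub]
        exact (le_abs_self _).trans (abs_sub _ _)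
      have h5 := lnorm_add_le' hp hp' (Mu (ihat ω) - Mu istar) (Mu istar - mu)
      rw [sub_add_sub_cancel, lnorm_sub_comm' p (Mu (ihat ω)) (Mu istar),
        lnorm_sub_comm' p (Mu istar) mu] at h5
      have h6 := mul_le_mul_of_nonneg_left (hQ _ hi) (mul_nonneg hκ0 hε0.le)
      linarith
  rw [hinf, ← hκ]
  have hCn : 0 ≤ 3 * r + 2 * Q * ε * κ := by positivity
  have hint : Integrable (fun ω => lnorm p (Mu (ihat ω) - mu)) P := by
    refine Integrable.of_bound (C := 2 * L) ?_ (ae_of_all _ fun ω => ?_)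
    · exact ((measurable_of_finite fun i => lnorm p (Mu i - mu)).comp hihatm).aestronglyMeasurable
    · rw [Real.norm_of_nonneg (lnorm_nonneg' hp' _)]; exact hbad _
  have hind : Integrable (B.indicator fun _ => 2 * L) P := (integrable_const _).indicator hBm
  calc ∫ ω, lnorm p (Mu (ihat ω) - mu) ∂P
      ≤ ∫ ω, ((3 * r + 2 * Q * ε * κ) + B.indicator (fun _ => 2 * L) ω) ∂P := by
        refine integral_mono hint ((integrable_const _).add hind) fun ω => ?_
        by_cases hω : ω ∈ B
        · simp only [Set.indicator_of_mem hω]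
          linarith [hbad (ihat ω)]
        · simp only [Set.indicator_of_notMem hω, add_zero]
          exact hgood ω hω
    _ = (3 * r + 2 * Q * ε * κ) + P.real B * (2 * L) := by
        rw [integral_add (integrable_const _) hind, integral_indicator_const _ hBm]
        simp
    _ ≤ 3 * r + 2 * Q * ε * κ + 2 * L * ε := by
        have := mul_le_mul_of_nonneg_right hPB (by positivity : 0 ≤ 2 * L)
        linarith
end

section
/- Consider the modified normal-means procedure of the context, which selects μ̃ = μ_ĩ with ĩ minimizing M̃_i := max_{ψ∈Ψ} |Δ_i(ψ)|/|ψ|_q (no knowledge of ε or Σ is needed). If Ψ is a (γ,p)-good set of probe vectors, then E|μ̃ − μ|_p ≤ (2·max_{ψ∈Ψ*} |ψ|_q + 1)·min_{i∈I_N} |μ_i − μ|_p + 2κε·(max_{ψ∈Ψ*} |ψ|_q)·(max_{ψ∈Ψ} |ψ|_Σ/|ψ|_q) + γ + 2Lδ. -/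
open MeasureTheory Matrix
open scoped ENNReal

/-- The seminorm `|ψ|_Σ = √(ψᵀ Σ ψ)` induced by a positive semidefinite matrix `Σ`. -/
noncomputable def signorm {n : ℕ} (Sig : Matrix (Fin n) (Fin n) ℝ) (v : Fin n → ℝ) : ℝ :=
  Real.sqrt (v ⬝ᵥ Sig.mulVec v)

theorem lnorm_eq {n : ℕ} (r : ℝ≥0∞) [Fact (1 ≤ r)] (v : Fin n → ℝ) :
    lnorm r v = ‖WithLp.toLp r v‖ := by
  unfold lnorm
  split_ifs with h
  · subst h
    rw [PiLp.norm_eq_ciSup]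
    simp
  · have h1 : (1 : ℝ≥0∞) ≤ r := Fact.out
    have : 0 < r.toReal := ENNReal.toReal_pos (by positivity) h
    rw [PiLp.norm_eq_sum this]
    simp

theorem holder_one_top {n : ℕ} (a b : Fin n → ℝ) :
    |a ⬝ᵥ b| ≤ lnorm 1 a * lnorm ⊤ b := by
  have h1 : lnorm 1 a = ∑ k, |a k| := by simp [lnorm]
  have h2 : lnorm ⊤ b = ⨆ k, |b k| := by simp [lnorm]
  rw [h1, h2, dotProduct, Finset.sum_mul]
  refine (Finset.abs_sum_le_sum_abs _ _).trans (Finset.sum_le_sum fun k _ => ?_)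
  rw [abs_mul]
  exact mul_le_mul_of_nonneg_left
    (le_ciSup (f := fun k => |b k|) (Set.finite_range _).bddAbove k) (abs_nonneg _)

theorem holder_lnorm {n : ℕ} (p q : ℝ≥0∞) [hpq : ENNReal.HolderConjugate p q]
    (a b : Fin n → ℝ) : |a ⬝ᵥ b| ≤ lnorm q a * lnorm p b := by
  by_cases hp : p = ⊤
  · subst hp
    have hq : q = 1 := by
      have := hpq.inv_add_inv_eq_inv
      simpa using this
    subst hq
    exact holder_one_top a b
  by_cases hq : q = ⊤
  · subst hq
    have hp : p = 1 := by
      have := hpq.inv_add_inv_eq_inv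
      simpa using this
    subst hp
    rw [dotProduct_comm, mul_comm]
    exact holder_one_top b a
  have H : q.toReal.HolderConjugate p.toReal := 
    (ENNReal.HolderConjugate.toReal_of_ne_top hp hq).symm
  simp only [lnorm, hp, hq, if_false]
  have h1 := Real.inner_le_Lp_mul_Lq Finset.univ (fun k => |a k|) (fun k => |b k|) H
  simp only [abs_abs] at h1
  refine le_trans ?_ h1
  refine (Finset.abs_sum_le_sum_abs _ _).trans (Finset.sum_le_sum fun k _ => ?_)
  rw [abs_mul]

/-- Theorem 7 of the paper: oracle inequality for the modified
normal-means aggregation procedure, which needs no knowledge of `ε` or `Σ`. -/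
theorem stmt_16
    {n N : ℕ} (hn : 1 ≤ n) (hN : 2 ≤ N)
    (p q : ℝ≥0∞) (hp : 1 ≤ p) (hpq : 1 / p + 1 / q = 1)
    (γ : ℝ) (hγ : 0 ≤ γ)
    (mu : Fin n → ℝ) (Mu : Fin N → Fin n → ℝ)
    (hdist : ∀ i j, i ≠ j → Mu i ≠ Mu j)
    (L : ℝ) (hL : L = max (lnorm p mu) (⨆ i, lnorm p (Mu i)))
    (Sig : Matrix (Fin n) (Fin n) ℝ) (hSig : Sig.PosSemidef)
    {K : Type} [Fintype K] [Nonempty K]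
    (ψ : K → Fin n → ℝ) (hψ0 : ∀ k, ψ k ≠ 0)
    (hψSig : ∀ k, 0 < signorm Sig (ψ k))
    (rep : Fin N → Fin N → K)
    (hgood : ∀ i j, i ≠ j →
      |ψ (rep i j) ⬝ᵥ (Mu i - Mu j) - lnorm p (Mu i - Mu j)| ≤ γ)
    {Ω : Type} [MeasurableSpace Ω] (P : Measure Ω) [IsProbabilityMeasure P]
    (w : Ω → Fin n → ℝ) (hw : Measurable w)
    (ε δ : ℝ) (hε : 0 < ε) (hδ0 : 0 < δ) (hδ1 : δ < 1)
    (κ : ℝ) (hκpos : 0 < κ)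
    (hκ : (P {ω | κ ≤ ⨆ k, |ψ k ⬝ᵥ w ω| / signorm Sig (ψ k)}).toReal ≤ δ)
    (Mtil : Fin N → Ω → ℝ)
    (hM : ∀ i ω, Mtil i ω = ⨆ k, |ψ k ⬝ᵥ (mu + ε • w ω - Mu i)| / lnorm q (ψ k))
    (itil : Ω → Fin N) (hitilm : Measurable itil)
    (hmin : ∀ ω i, Mtil (itil ω) ω ≤ Mtil i ω)
    (istar : Fin N)
    (histar : ∀ i, lnorm p (Mu istar - mu) ≤ lnorm p (Mu i - mu)) :
    ∫ ω, lnorm p (Mu (itil ω) - mu) ∂P ≤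
      (2 * (⨆ j : {j : Fin N // j ≠ istar}, lnorm q (ψ (rep istar j.1))) + 1) *
          (⨅ i, lnorm p (Mu i - mu))
        + 2 * κ * ε * (⨆ j : {j : Fin N // j ≠ istar}, lnorm q (ψ (rep istar j.1))) *
            (⨆ k, signorm Sig (ψ k) / lnorm q (ψ k))
        + γ + 2 * L * δ := by
  haveI fp : Fact (1 ≤ p) := ⟨hp⟩
  haveI hc : ENNReal.HolderConjugate p q :=
    ENNReal.holderConjugate_iff.2 (by simpa using hpq)
  haveI fq : Fact (1 ≤ q) := ⟨by
    have h1 : q⁻¹ ≤ 1 := by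
      rw [← ENNReal.holderConjugate_iff.1 hc]; exact le_add_self
    simpa using h1⟩
  haveI : Nonempty (Fin N) := ⟨istar⟩
  have nn : ∀ v : Fin n → ℝ, 0 ≤ lnorm p v := fun v => by
    rw [lnorm_eq]; exact norm_nonneg _
  have nnq : ∀ v : Fin n → ℝ, 0 ≤ lnorm q v := fun v => by
    rw [lnorm_eq]; exact norm_nonneg _
  have posq : ∀ k, 0 < lnorm q (ψ k) := fun k => by
    rw [lnorm_eq]
    refine norm_pos_iff.2 ?_
    intro h
    exact hψ0 k (by simpa using h)
  have tri : ∀ a b : Fin n → ℝ, lnorm p (a - b) ≤ lnorm p a + lnorm p b := fun a b => by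
    simp only [lnorm_eq, WithLp.toLp_sub]; exact norm_sub_le _ _
  have symm : ∀ a b : Fin n → ℝ, lnorm p (a - b) = lnorm p (b - a) := fun a b => by
    simp only [lnorm_eq, WithLp.toLp_sub]; exact norm_sub_rev _ _
  set A := ⨆ j : {j : Fin N // j ≠ istar}, lnorm q (ψ (rep istar j.1)) with hA
  set S := ⨆ k, signorm Sig (ψ k) / lnorm q (ψ k) with hS
  have hinf : (⨅ i, lnorm p (Mu i - mu)) = lnorm p (Mu istar - mu) :=
    le_antisymm (ciInf_le (Set.finite_range _).bddBelow istar) (le_ciInf histar)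
  rw [hinf]
  set d := lnorm p (Mu istar - mu) with hd
  have hd0 : 0 ≤ d := nn _
  have hA0 : 0 ≤ A := Real.iSup_nonneg fun j => nnq _
  have hSk : ∀ k, signorm Sig (ψ k) / lnorm q (ψ k) ≤ S := fun k =>
    le_ciSup (f := fun k => signorm Sig (ψ k) / lnorm q (ψ k)) (Set.finite_range _).bddAbove k
  have hS0 : 0 ≤ S := Real.iSup_nonneg fun k => div_nonneg (hψSig k).le (nnq _)
  set B := (2 * A + 1) * d + 2 * κ * ε * A * S + γ with hB
  have hB0 : 0 ≤ B := by positivity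
  have hLmu : lnorm p mu ≤ L := hL ▸ le_max_left _ _
  have hLMu : ∀ i, lnorm p (Mu i) ≤ L := fun i => by
    rw [hL]
    exact (le_ciSup (f := fun i => lnorm p (Mu i)) (Set.finite_range _).bddAbove i).trans
      (le_max_right _ _)
  have hL0 : 0 ≤ L := (nn mu).trans hLmu
  have h2L : ∀ i, lnorm p (Mu i - mu) ≤ 2 * L := fun i => by
    have := tri (Mu i) mu
    have := hLMu i
    linarith
  set bad := {ω | κ ≤ ⨆ k, |ψ k ⬝ᵥ w ω| / signorm Sig (ψ k)} with hbad
  have hbadm : MeasurableSet bad := by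
    refine measurableSet_le measurable_const (Measurable.iSup fun k => ?_)
    refine Measurable.div_const ?_ _
    refine Measurable.abs ?_
    unfold dotProduct
    exact Finset.measurable_sum _ fun i _ => ((measurable_pi_apply i).comp hw).const_mul _
  have hgoodω : ∀ ω, ω ∉ bad → lnorm p (Mu (itil ω) - mu) ≤ B := by
    intro ω hω
    have hω' : (⨆ k, |ψ k ⬝ᵥ w ω| / signorm Sig (ψ k)) < κ := not_le.1 hω
    have hwk : ∀ k, |ψ k ⬝ᵥ w ω| ≤ κ * signorm Sig (ψ k) := fun k => by
      have := le_ciSup (f := fun k => |ψ k ⬝ᵥ w ω| / signorm Sig (ψ k))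
        (Set.finite_range _).bddAbove k
      exact (div_le_iff₀ (hψSig k)).1 (this.trans hω'.le)
    by_cases hi : itil ω = istar
    · rw [hi, ← hd, hB]
      have : 0 ≤ 2 * A * d + 2 * κ * ε * A * S + γ := by positivity
      linarith
    have hMs : Mtil istar ω ≤ d + ε * κ * S := by
      rw [hM]
      refine ciSup_le fun k => ?_
      rw [div_le_iff₀ (posq k)]
      have e : ψ k ⬝ᵥ (mu + ε • w ω - Mu istar)
          = ψ k ⬝ᵥ (mu - Mu istar) + ε * (ψ k ⬝ᵥ w ω) := by
        rw [← smul_eq_mul, ← dotProduct_smul, ← dotProduct_add]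
        congr 1; abel
      rw [e]
      have h1 := holder_lnorm p q (ψ k) (mu - Mu istar)
      rw [symm, ← hd] at h1
      have h2 := abs_add_le (ψ k ⬝ᵥ (mu - Mu istar)) (ε * (ψ k ⬝ᵥ w ω))
      rw [abs_mul, abs_of_pos hε] at h2
      have h3 := mul_le_mul_of_nonneg_left (hwk k) hε.le
      have h4 := (div_le_iff₀ (posq k)).1 (hSk k)
      have h5 := mul_le_mul_of_nonneg_left h4 (mul_pos hε hκpos).le
      linarith
    have hMle : ∀ i k, |ψ k ⬝ᵥ (mu + ε • w ω - Mu i)| ≤ lnorm q (ψ k) * Mtil i ω := by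
      intro i k
      rw [hM, mul_comm, ← div_le_iff₀ (posq k)]
      exact le_ciSup (f := fun k => |ψ k ⬝ᵥ (mu + ε • w ω - Mu i)| / lnorm q (ψ k))
        (Set.finite_range _).bddAbove k
    have hg := (abs_le.1 (hgood istar (itil ω) (Ne.symm hi))).1
    set k := rep istar (itil ω) with hk
    have e : ψ k ⬝ᵥ (Mu istar - Mu (itil ω)) = ψ k ⬝ᵥ (mu + ε • w ω - Mu (itil ω))
        - ψ k ⬝ᵥ (mu + ε • w ω - Mu istar) := by
      rw [← dotProduct_sub]; congr 1; abel
    have h1 := (le_abs_self _).trans (hMle (itil ω) k)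
    have h2 := (neg_le_abs _).trans (hMle istar k)
    have h3 := mul_le_mul_of_nonneg_left (hmin ω istar) (nnq (ψ k))
    have h4 := mul_le_mul_of_nonneg_left hMs (nnq (ψ k))
    have h5 : lnorm q (ψ k) ≤ A :=
      le_ciSup (f := fun j : {j : Fin N // j ≠ istar} => lnorm q (ψ (rep istar j.1)))
        (Set.finite_range _).bddAbove ⟨itil ω, hi⟩
    have h6 : lnorm q (ψ k) * (d + ε * κ * S) ≤ A * (d + ε * κ * S) :=
      mul_le_mul_of_nonneg_right h5 (by positivity)
    have h7 := tri (Mu istar - mu) (Mu istar - Mu (itil ω))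
    rw [sub_sub_sub_cancel_left, ← hd] at h7
    rw [hB]
    linarith
  have hint : Integrable (fun ω => B + bad.indicator (fun _ => 2 * L) ω) P :=
    (integrable_const _).add ((integrable_const _).indicator hbadm)
  have hmono : ∫ ω, lnorm p (Mu (itil ω) - mu) ∂P ≤
      ∫ ω, (B + bad.indicator (fun _ => 2 * L) ω) ∂P := by
    refine integral_mono_of_nonneg (Filter.Eventually.of_forall fun ω => nn _) hint
      (Filter.Eventually.of_forall fun ω => ?_)
    by_cases hω : ω ∈ bad
    · simp only [Set.indicator_of_mem hω]
      have := h2L (itil ω)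
      linarith
    · simp only [Set.indicator_of_notMem hω]
      have := hgoodω ω hω
      linarith
  refine hmono.trans ?_
  rw [integral_add (integrable_const _) ((integrable_const _).indicator hbadm),
    integral_indicator_const _ hbadm, integral_const]
  have h8 : P.real bad * (2 * L) ≤ δ * (2 * L) :=
    mul_le_mul_of_nonneg_right hκ (by positivity)
  simp only [probReal_univ, smul_eq_mul, one_mul]
  linarith
end
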